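/- Let κᵢ, θᵢ, σᵢ > 0 with νᵢ := 2κᵢθᵢ/σᵢ², βᵢ := εᵢ/σᵢ², αᵢ := γ/σᵢ² for i = 1,2, where ε₁, ε₂ ≥ 0 and γ ∈ ℝ, and let π(x₁,x₂) := π_{ν₁,θ₁}(x₁)·π_{ν₂,θ₂}(x₂). Let L be the ADC generator L f := A₁·∂₁f + A₂·∂₂f + (1/2)(S₁₁·∂₁₁f + 2S₁₂·∂₁₂f + S₂₂·∂₂₂f), where A₁(x) = κ₁(1 + β₁x₂)(θ₁ − x₁) + κ₂α₂x₁(θ₂ − x₂), A₂(x) = κ₂(1 + β₂x₁)(θ₂ − x₂) + κ₁α₁x₂(θ₁ − x₁), S₁₁ = σ₁²x₁ + ε₁x₁x₂, S₁₂ = S₂₁ = γx₁x₂, S₂₂ = σ₂²x₂ + ε₂x₁x₂. Then for all f, g : ℝ² → ℝ twice continuously differentiable with compact support contained in (0,∞)², ∫∫_{(0,∞)²} f(x)·(L g)(x)·π(x) dx = ∫∫_{(0,∞)²} g(x)·(L f)(x)·π(x) dx; that is, the ADC process is reversible with respect to the product of the two Gamma distributions π_{ν₁,θ₁} and π_{ν₂,θ₂}.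 -/

import Mathlib

open Real MeasureTheory Set

/-- Gamma density with shape `ν` and rate `ν/θ`. -/
noncomputable def piDens (ν θ x : ℝ) : ℝ :=
  ((ν / θ) ^ ν / Real.Gamma ν) * x ^ (ν - 1) * Real.exp (-ν * x / θ)

/-- Partial derivative in the first variable. -/
noncomputable def d1 (f : ℝ × ℝ → ℝ) (p : ℝ × ℝ) : ℝ :=
  deriv (fun t => f (t, p.2)) p.1

/-- Partial derivative in the second variable. -/
noncomputable def d2 (f : ℝ × ℝ → ℝ) (p : ℝ × ℝ) : ℝ :=
  deriv (fun t => f (p.1, t)) p.2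

/-- Product of two Gamma densities. -/
noncomputable def pi2 (ν₁ θ₁ ν₂ θ₂ : ℝ) (p : ℝ × ℝ) : ℝ :=
  piDens ν₁ θ₁ p.1 * piDens ν₂ θ₂ p.2

/-- Entry `S₁₁` of the ADC diffusion matrix. -/
noncomputable def S11 (σ₁ ε₁ : ℝ) (p : ℝ × ℝ) : ℝ := σ₁ ^ 2 * p.1 + ε₁ * p.1 * p.2

/-- Off-diagonal entry `S₁₂ = S₂₁` of the ADC diffusion matrix. -/
noncomputable def S12 (γ : ℝ) (p : ℝ × ℝ) : ℝ := γ * p.1 * p.2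

/-- Entry `S₂₂` of the ADC diffusion matrix. -/
noncomputable def S22 (σ₂ ε₂ : ℝ) (p : ℝ × ℝ) : ℝ := σ₂ ^ 2 * p.2 + ε₂ * p.1 * p.2

/-- First component of the ADC drift. -/
noncomputable def A1 (κ₁ θ₁ σ₁ κ₂ θ₂ σ₂ ε₁ γ : ℝ) (p : ℝ × ℝ) : ℝ :=
  κ₁ * (1 + ε₁ / σ₁ ^ 2 * p.2) * (θ₁ - p.1)
    + κ₂ * (γ / σ₂ ^ 2) * p.1 * (θ₂ - p.2)

/-- Second component of the ADC drift. -/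
noncomputable def A2 (κ₁ θ₁ σ₁ κ₂ θ₂ σ₂ ε₂ γ : ℝ) (p : ℝ × ℝ) : ℝ :=
  κ₂ * (1 + ε₂ / σ₂ ^ 2 * p.1) * (θ₂ - p.2)
    + κ₁ * (γ / σ₁ ^ 2) * p.2 * (θ₁ - p.1)

/-- The generator of the ADC bivariate CIR-like model. -/
noncomputable def adcGen (κ₁ θ₁ σ₁ κ₂ θ₂ σ₂ ε₁ ε₂ γ : ℝ)
    (f : ℝ × ℝ → ℝ) (p : ℝ × ℝ) : ℝ :=
  A1 κ₁ θ₁ σ₁ κ₂ θ₂ σ₂ ε₁ γ p * d1 f p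
    + A2 κ₁ θ₁ σ₁ κ₂ θ₂ σ₂ ε₂ γ p * d2 f p
    + 1 / 2 * (S11 σ₁ ε₁ p * d1 (d1 f) p
        + 2 * S12 γ p * d1 (d2 f) p
        + S22 σ₂ ε₂ p * d2 (d2 f) p)

/-!
On `Q = (0, ∞)²` the weight `w = π_{ν₁,θ₁} ⊗ π_{ν₂,θ₂}` puts the generator in divergence form,
`w · L g = ½ ∑ᵢ ∂ᵢ (w ∑ⱼ Sᵢⱼ ∂ⱼ g)`, which amounts to `w Aⱼ = ½ ∑ᵢ ∂ᵢ (w Sᵢⱼ)`. The latter comes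
from the Pearson equation `(x π_{ν,θ}(x))' = ν (1 - x / θ) π_{ν,θ}(x)` of the Gamma density.
Integrating by parts turns `∫ f · L g · w` into `-½ ∫ ∑ᵢⱼ w Sᵢⱼ ∂ᵢ f ∂ⱼ g`, which is symmetric in
`f` and `g` because `S` is symmetric. No boundary term appears as soon as the supports of `f` and
`g` meet in a compact subset of `Q`.
-/

section LineDeriv

variable {𝕜 : Type*} [NontriviallyNormedField 𝕜]
  {E : Type*} [NormedAddCommGroup E] [NormedSpace 𝕜 E]
  {F : Type*} [NormedAddCommGroup F] [NormedSpace 𝕜 F]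

theorem hasLineDerivAt_mul {a b : E → 𝕜} {a' b' : 𝕜} {x v : E}
    (ha : HasLineDerivAt 𝕜 a a' x v) (hb : HasLineDerivAt 𝕜 b b' x v) :
    HasLineDerivAt 𝕜 (fun y ↦ a y * b y) (a' * b x + a x * b') x v := by
  simpa [HasLineDerivAt] using HasDerivAt.fun_mul ha hb

theorem hasLineDerivAt_sum {ι : Type*} {s : Finset ι} {f : ι → E → F} {f' : ι → F} {x v : E}
    (hf : ∀ i ∈ s, HasLineDerivAt 𝕜 (f i) (f' i) x v) :
    HasLineDerivAt 𝕜 (fun y ↦ ∑ i ∈ s, f i y) (∑ i ∈ s, f' i) x v :=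
  HasDerivAt.fun_sum hf

theorem support_lineDeriv_subset (f : E → F) (v : E) :
    Function.support (fun x ↦ lineDeriv 𝕜 f x v) ⊆ tsupport f := by
  intro x hx
  contrapose! hx
  have hzero : f =ᶠ[nhds x] fun _ ↦ 0 := notMem_tsupport_iff_eventuallyEq.mp hx
  rw [Function.notMem_support, hzero.lineDeriv_eq]
  exact deriv_const 0 0

theorem contDiffOn_lineDeriv {m n : WithTop ℕ∞} {f : E → F} {Q : Set E} (hQ : IsOpen Q)
    (hf : ContDiffOn 𝕜 n f Q) (hmn : m + 1 ≤ n) (v : E) :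
    ContDiffOn 𝕜 m (fun x ↦ lineDeriv 𝕜 f x v) Q := by
  have hn : n ≠ 0 := (lt_of_lt_of_le (by simp) hmn).ne'
  refine ((hf.fderiv_of_isOpen hQ hmn).clm_apply
    (contDiffOn_const (c := v))).congr fun x hx ↦ ?_
  exact ((hf.contDiffAt (hQ.mem_nhds hx)).differentiableAt hn).lineDeriv_eq_fderiv

theorem hasLineDerivAt_of_contDiffOn {f : E → F} {Q : Set E} {x : E} (hQ : IsOpen Q)
    (hf : ContDiffOn 𝕜 1 f Q) (hx : x ∈ Q) (v : E) :
    HasLineDerivAt 𝕜 f (lineDeriv 𝕜 f x v) x v :=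
  ((hf.contDiffAt (hQ.mem_nhds hx)).differentiableAt
    one_ne_zero).lineDifferentiableAt.hasLineDerivAt

theorem contDiff_of_contDiffOn_of_tsupport_subset {n : WithTop ℕ∞} {f : E → F} {Q : Set E}
    (hQ : IsOpen Q) (hf : ContDiffOn 𝕜 n f Q) (hfQ : tsupport f ⊆ Q) : ContDiff 𝕜 n f :=
  contMDiff_iff_contDiff.mp <| contMDiff_of_tsupport fun _ hx ↦
    (hf.contDiffAt (hQ.mem_nhds (hfQ hx))).contMDiffAt

theorem lineDeriv_lineDeriv_comm {𝕜 : Type*} [RCLike 𝕜] {E : Type*} [NormedAddCommGroup E]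
    [NormedSpace 𝕜 E] {F : Type*} [NormedAddCommGroup F] [NormedSpace 𝕜 F]
    {f : E → F} {x : E} (hf : ContDiffAt 𝕜 2 f x) (v u : E) :
    lineDeriv 𝕜 (fun y ↦ lineDeriv 𝕜 f y v) x u =
      lineDeriv 𝕜 (fun y ↦ lineDeriv 𝕜 f y u) x v := by
  have hfderiv : DifferentiableAt 𝕜 (fderiv 𝕜 f) x :=
    (hf.fderiv_right (m := 1) le_rfl).differentiableAt one_ne_zero
  have lineDeriv_lineDeriv (v u : E) :
      lineDeriv 𝕜 (fun y ↦ lineDeriv 𝕜 f y v) x u = fderiv 𝕜 (fderiv 𝕜 f) x u v := by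
    have hnear : (fun y ↦ lineDeriv 𝕜 f y v) =ᶠ[nhds x] fun y ↦ fderiv 𝕜 f y v := by
      filter_upwards [hf.eventually (by simp)] with y hy
      exact (hy.differentiableAt two_ne_zero).lineDeriv_eq_fderiv
    rw [hnear.lineDeriv_eq, (hfderiv.clm_apply (by fun_prop)).lineDeriv_eq_fderiv,
      fderiv_clm_apply hfderiv (by fun_prop)]
    simp
  rw [lineDeriv_lineDeriv, lineDeriv_lineDeriv]
  exact hf.isSymmSndFDerivAt (by simp) u v

end LineDeriv

section IntegrationByParts

variable {E : Type*} [NormedAddCommGroup E] [NormedSpace ℝ E]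
  [MeasurableSpace E] [BorelSpace E] {μ : Measure E} {Q K : Set E} {a b : E → ℝ}

theorem integrable_mul_lineDeriv [IsFiniteMeasureOnCompacts μ] (hQ : IsOpen Q)
    (hK : IsCompact K) (hKQ : K ⊆ Q) (ha : ContinuousOn a Q) (hb : ContDiffOn ℝ 1 b Q)
    (habK : tsupport a ∩ tsupport b ⊆ K) (v : E) :
    Integrable (fun x ↦ a x * lineDeriv ℝ b x v) μ := by
  have hb' : ContinuousOn (fun x ↦ lineDeriv ℝ b x v) Q :=
    (contDiffOn_lineDeriv (m := 0) hQ hb (by simp) v).continuousOn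
  have hsupport : Function.support (fun x ↦ a x * lineDeriv ℝ b x v) ⊆ K := by
    rw [Function.support_mul]
    exact (inter_subset_inter (subset_tsupport a) (support_lineDeriv_subset b v)).trans habK
  exact (integrableOn_iff_integrable_of_support_subset hsupport).mp
    (((ha.mul hb').mono hKQ).integrableOn_compact hK)

variable [FiniteDimensional ℝ E] [μ.IsAddHaarMeasure]

theorem integral_lineDeriv_eq_zero (ha : ContDiff ℝ 1 a) (hac : HasCompactSupport a) (v : E) :
    ∫ x, lineDeriv ℝ a x v ∂μ = 0 := by
  have hda : Differentiable ℝ a := ha.differentiable one_ne_zero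
  have hint : Integrable (fun x ↦ fderiv ℝ a x v) μ :=
    ((ha.continuous_fderiv one_ne_zero).clm_apply continuous_const).integrable_of_hasCompactSupport
      (hac.fderiv_apply (𝕜 := ℝ) v)
  have hparts := integral_mul_fderiv_eq_neg_fderiv_mul_of_integrable (μ := μ) (v := v)
    (f := fun _ ↦ (1 : ℝ)) (g := a) (by simp) (by simpa using hint)
    (by simpa using ha.continuous.integrable_of_hasCompactSupport hac)
    (fun _ _ ↦ differentiableAt_const _) (fun x _ ↦ hda x)
  simpa [(hda _).lineDeriv_eq_fderiv] using hparts

theorem setIntegral_mul_lineDeriv_eq_neg (hQ : IsOpen Q) (hK : IsCompact K) (hKQ : K ⊆ Q)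
    (ha : ContDiffOn ℝ 1 a Q) (hb : ContDiffOn ℝ 1 b Q)
    (habK : tsupport a ∩ tsupport b ⊆ K) (v : E) :
    ∫ x in Q, a x * lineDeriv ℝ b x v ∂μ = -∫ x in Q, b x * lineDeriv ℝ a x v ∂μ := by
  have htsupport : tsupport (fun x ↦ a x * b x) ⊆ K :=
    (subset_inter tsupport_mul_subset_left tsupport_mul_subset_right).trans habK
  have hsmooth : ContDiff ℝ 1 (fun x ↦ a x * b x) :=
    contDiff_of_contDiffOn_of_tsupport_subset hQ (ha.mul hb) (htsupport.trans hKQ)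
  have hcompact : HasCompactSupport (fun x ↦ a x * b x) :=
    hK.of_isClosed_subset (isClosed_tsupport _) htsupport
  have hab : IntegrableOn (fun x ↦ a x * lineDeriv ℝ b x v) Q μ :=
    (integrable_mul_lineDeriv hQ hK hKQ ha.continuousOn hb habK v).integrableOn
  have hba : IntegrableOn (fun x ↦ b x * lineDeriv ℝ a x v) Q μ :=
    (integrable_mul_lineDeriv hQ hK hKQ hb.continuousOn ha
      (by rwa [inter_comm]) v).integrableOn
  rw [eq_neg_iff_add_eq_zero, ← integral_add hab hba]
  calc ∫ x in Q, a x * lineDeriv ℝ b x v + b x * lineDeriv ℝ a x v ∂μ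
    _ = ∫ x in Q, lineDeriv ℝ (fun y ↦ a y * b y) x v ∂μ := by
      refine setIntegral_congr_fun hQ.measurableSet fun x hx ↦ ?_
      rw [(hasLineDerivAt_mul (hasLineDerivAt_of_contDiffOn hQ ha hx v)
        (hasLineDerivAt_of_contDiffOn hQ hb hx v)).lineDeriv]
      ring
    _ = ∫ x, lineDeriv ℝ (fun y ↦ a y * b y) x v ∂μ :=
      setIntegral_eq_integral_of_forall_compl_eq_zero fun x hx ↦ Function.notMem_support.mp
        fun hx' ↦ hx (hKQ (htsupport (support_lineDeriv_subset _ v hx')))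
    _ = 0 := integral_lineDeriv_eq_zero hsmooth hcompact v

end IntegrationByParts

section Diffusion

variable {E : Type*} [NormedAddCommGroup E] [NormedSpace ℝ E] {ι : Type*} [Fintype ι]
  {v : ι → E} {A : ι → E → ℝ} {S : ι → ι → E → ℝ} {w f g : E → ℝ} {Q : Set E}

/-- The generator `L f = ∑ⱼ Aⱼ ∂ⱼ f + ½ ∑ᵢⱼ Sᵢⱼ ∂ᵢ ∂ⱼ f` of a diffusion with drift `A` and diffusion
matrix `S`, where `∂ᵢ` is the derivative in the direction `v i`. The directions `v i` need not form
a basis. -/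
noncomputable def diffusionGenerator (v : ι → E) (A : ι → E → ℝ) (S : ι → ι → E → ℝ)
    (f : E → ℝ) (x : E) : ℝ :=
  ∑ j, A j x * lineDeriv ℝ f x (v j) +
    1 / 2 * ∑ i, ∑ j, S i j x * lineDeriv ℝ (fun y ↦ lineDeriv ℝ f y (v j)) x (v i)

/-- The `i`-th component `½ ∑ⱼ w Sᵢⱼ ∂ⱼ f` of the flux of `f` for the weight `w`, the vector field
whose divergence is `w · L f` when `w` is a reversible weight. -/
noncomputable def diffusionFlux (v : ι → E) (S : ι → ι → E → ℝ) (w f : E → ℝ) (i : ι) (x : E) :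
    ℝ :=
  1 / 2 * ∑ j, w x * S i j x * lineDeriv ℝ f x (v j)

/-- `w` is a density on `Q` with respect to which the diffusion with drift `A` and diffusion matrix
`S` satisfies detailed balance, that is, whose stationary probability current vanishes. Neither
positivity nor normalization of `w` is required. -/
structure IsReversibleWeight (Q : Set E) (v : ι → E) (A : ι → E → ℝ) (S : ι → ι → E → ℝ)
    (w : E → ℝ) : Prop where
  contDiffOn (i j : ι) : ContDiffOn ℝ 1 (fun x ↦ w x * S i j x) Q
  symm (i j : ι) : ∀ x ∈ Q, S i j x = S j i x
  drift (j : ι) : ∀ x ∈ Q,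
    w x * A j x = 1 / 2 * ∑ i, lineDeriv ℝ (fun y ↦ w y * S i j y) x (v i)

theorem tsupport_diffusionFlux_subset (i : ι) : tsupport (diffusionFlux v S w f i) ⊆ tsupport f := by
  refine closure_minimal (fun x hx ↦ ?_) (isClosed_tsupport f)
  obtain ⟨j, -, hj⟩ := Finset.exists_ne_zero_of_sum_ne_zero (right_ne_zero_of_mul hx)
  exact support_lineDeriv_subset f (v j) (right_ne_zero_of_mul hj)

namespace IsReversibleWeight

theorem contDiffOn_diffusionFlux (hw : IsReversibleWeight Q v A S w) (hQ : IsOpen Q)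
    (hf : ContDiffOn ℝ 2 f Q) (i : ι) : ContDiffOn ℝ 1 (diffusionFlux v S w f i) Q :=
  contDiffOn_const.mul <| ContDiffOn.sum fun j _ ↦ (hw.contDiffOn i j).mul
    (contDiffOn_lineDeriv hQ hf (by norm_num) (v j))

theorem sum_lineDeriv_diffusionFlux (hw : IsReversibleWeight Q v A S w) (hQ : IsOpen Q)
    (hf : ContDiffOn ℝ 2 f Q) {x : E} (hx : x ∈ Q) :
    ∑ i, lineDeriv ℝ (diffusionFlux v S w f i) x (v i) = w x * diffusionGenerator v A S f x := by
  have hflux (i : ι) : lineDeriv ℝ (diffusionFlux v S w f i) x (v i) =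
      1 / 2 * ∑ j, (lineDeriv ℝ (fun y ↦ w y * S i j y) x (v i) * lineDeriv ℝ f x (v j) +
        w x * S i j x * lineDeriv ℝ (fun y ↦ lineDeriv ℝ f y (v j)) x (v i)) :=
    HasLineDerivAt.lineDeriv <| HasDerivAt.const_mul (1 / 2) <| hasLineDerivAt_sum fun j _ ↦
      hasLineDerivAt_mul (hasLineDerivAt_of_contDiffOn hQ (hw.contDiffOn i j) hx (v i))
        (hasLineDerivAt_of_contDiffOn hQ (contDiffOn_lineDeriv hQ hf (by norm_num) (v j)) hx (v i))
  have hdrift : 1 / 2 * ∑ i, ∑ j, lineDeriv ℝ (fun y ↦ w y * S i j y) x (v i) *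
      lineDeriv ℝ f x (v j) = w x * ∑ j, A j x * lineDeriv ℝ f x (v j) := by
    rw [Finset.sum_comm]
    simp only [← Finset.sum_mul, Finset.mul_sum, ← mul_assoc, hw.drift _ x hx]
  have hdiffusion : ∑ i, ∑ j, w x * S i j x * lineDeriv ℝ (fun y ↦ lineDeriv ℝ f y (v j)) x (v i) =
      w x * ∑ i, ∑ j, S i j x * lineDeriv ℝ (fun y ↦ lineDeriv ℝ f y (v j)) x (v i) := by
    simp only [Finset.mul_sum, mul_assoc]
  simp only [hflux, ← Finset.mul_sum, Finset.sum_add_distrib]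
  rw [mul_add, hdrift, hdiffusion, diffusionGenerator]
  ring

theorem sum_diffusionFlux_mul_lineDeriv_comm (hw : IsReversibleWeight Q v A S w) {x : E}
    (hx : x ∈ Q) :
    ∑ i, diffusionFlux v S w g i x * lineDeriv ℝ f x (v i) =
      ∑ i, diffusionFlux v S w f i x * lineDeriv ℝ g x (v i) := by
  simp only [diffusionFlux, Finset.mul_sum, Finset.sum_mul]
  rw [Finset.sum_comm]
  refine Finset.sum_congr rfl fun i _ ↦ Finset.sum_congr rfl fun j _ ↦ ?_
  rw [hw.symm i j x hx]
  ring

variable [FiniteDimensional ℝ E] [MeasurableSpace E] [BorelSpace E] {μ : Measure E}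
  [μ.IsAddHaarMeasure]

theorem setIntegral_mul_diffusionGenerator (hw : IsReversibleWeight Q v A S w) (hQ : IsOpen Q)
    (hf : ContDiffOn ℝ 2 f Q) (hg : ContDiffOn ℝ 2 g Q)
    (hfg : IsCompact (tsupport f ∩ tsupport g)) (hfgQ : tsupport f ∩ tsupport g ⊆ Q) :
    ∫ x in Q, f x * diffusionGenerator v A S g x * w x ∂μ =
      -∫ x in Q, ∑ i, diffusionFlux v S w g i x * lineDeriv ℝ f x (v i) ∂μ := by
  have hf₁ : ContDiffOn ℝ 1 f Q := hf.of_le one_le_two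
  have hflux (i : ι) : ContDiffOn ℝ 1 (diffusionFlux v S w g i) Q :=
    hw.contDiffOn_diffusionFlux hQ hg i
  have hsupport (i : ι) :
      tsupport f ∩ tsupport (diffusionFlux v S w g i) ⊆ tsupport f ∩ tsupport g :=
    inter_subset_inter_right _ (tsupport_diffusionFlux_subset i)
  calc ∫ x in Q, f x * diffusionGenerator v A S g x * w x ∂μ
    _ = ∫ x in Q, ∑ i, f x * lineDeriv ℝ (diffusionFlux v S w g i) x (v i) ∂μ := by
      refine setIntegral_congr_fun hQ.measurableSet fun x hx ↦ ?_
      rw [← Finset.mul_sum, hw.sum_lineDeriv_diffusionFlux hQ hg hx]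
      ring
    _ = ∑ i, ∫ x in Q, f x * lineDeriv ℝ (diffusionFlux v S w g i) x (v i) ∂μ :=
      integral_finsetSum _ fun i _ ↦ (integrable_mul_lineDeriv hQ hfg hfgQ hf.continuousOn
        (hflux i) (hsupport i) (v i)).integrableOn
    _ = ∑ i, -∫ x in Q, diffusionFlux v S w g i x * lineDeriv ℝ f x (v i) ∂μ :=
      Finset.sum_congr rfl fun i _ ↦ setIntegral_mul_lineDeriv_eq_neg hQ hfg hfgQ hf₁
        (hflux i) (hsupport i) (v i)
    _ = -∫ x in Q, ∑ i, diffusionFlux v S w g i x * lineDeriv ℝ f x (v i) ∂μ := by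
      rw [Finset.sum_neg_distrib, integral_finsetSum]
      exact fun i _ ↦ (integrable_mul_lineDeriv hQ hfg hfgQ (hflux i).continuousOn hf₁
        (by rw [inter_comm]; exact hsupport i) (v i)).integrableOn

theorem setIntegral_mul_diffusionGenerator_comm (hw : IsReversibleWeight Q v A S w)
    (hQ : IsOpen Q) (hf : ContDiffOn ℝ 2 f Q) (hg : ContDiffOn ℝ 2 g Q)
    (hfg : IsCompact (tsupport f ∩ tsupport g)) (hfgQ : tsupport f ∩ tsupport g ⊆ Q) :
    ∫ x in Q, f x * diffusionGenerator v A S g x * w x ∂μ =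
      ∫ x in Q, g x * diffusionGenerator v A S f x * w x ∂μ := by
  rw [hw.setIntegral_mul_diffusionGenerator hQ hf hg hfg hfgQ,
    hw.setIntegral_mul_diffusionGenerator hQ hg hf (by rwa [inter_comm]) (by rwa [inter_comm])]
  exact congrArg Neg.neg <| setIntegral_congr_fun hQ.measurableSet fun x hx ↦
    hw.sum_diffusionFlux_mul_lineDeriv_comm hx

end IsReversibleWeight

end Diffusion

section ADC

theorem contDiffAt_piDens {n : WithTop ℕ∞} (ν θ : ℝ) {x : ℝ} (hx : x ≠ 0) :
    ContDiffAt ℝ n (piDens ν θ) x :=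
  (contDiffAt_const.mul (Real.contDiffAt_rpow_const_of_ne hx)).mul
    (contDiffAt_const.mul contDiffAt_id |>.div_const θ).exp

theorem hasDerivAt_piDens (ν θ : ℝ) {x : ℝ} (hx : x ≠ 0) :
    HasDerivAt (piDens ν θ) (((ν - 1) / x - ν / θ) * piDens ν θ x) x := by
  have hpow : HasDerivAt (fun x : ℝ ↦ x ^ (ν - 1)) ((ν - 1) * x ^ (ν - 1 - 1)) x :=
    Real.hasDerivAt_rpow_const (Or.inl hx)
  have hexp : HasDerivAt (fun x : ℝ ↦ Real.exp (-ν * x / θ))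
      (Real.exp (-ν * x / θ) * (-ν * 1 / θ)) x :=
    (((hasDerivAt_id x).const_mul (-ν)).div_const θ).exp
  refine ((hpow.const_mul ((ν / θ) ^ ν / Real.Gamma ν)).mul hexp).congr_deriv ?_
  rw [Real.rpow_sub_one hx, piDens]
  ring

theorem hasDerivAt_piDens_mul_id (ν θ : ℝ) {x : ℝ} (hx : x ≠ 0) :
    HasDerivAt (fun x ↦ piDens ν θ x * x) (ν * (1 - x / θ) * piDens ν θ x) x := by
  refine ((hasDerivAt_piDens ν θ hx).mul (hasDerivAt_id x)).congr_deriv ?_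
  simp only [id]
  field_simp
  ring

theorem contDiffOn_pi2 {n : WithTop ℕ∞} (ν₁ θ₁ ν₂ θ₂ : ℝ) :
    ContDiffOn ℝ n (pi2 ν₁ θ₁ ν₂ θ₂) (Ioi 0 ×ˢ Ioi 0) := fun p hp ↦
  (((contDiffAt_piDens ν₁ θ₁ (ne_of_gt hp.1)).comp p contDiffAt_fst).mul
    ((contDiffAt_piDens ν₂ θ₂ (ne_of_gt hp.2)).comp p contDiffAt_snd)).contDiffWithinAt

theorem d1_eq_lineDeriv (f : ℝ × ℝ → ℝ) : d1 f = fun p ↦ lineDeriv ℝ f p (1, 0) := by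
  funext p
  simpa [lineDeriv, d1, Prod.add_def] using (deriv_comp_const_add (fun t ↦ f (t, p.2)) p.1 0).symm

theorem d2_eq_lineDeriv (f : ℝ × ℝ → ℝ) : d2 f = fun p ↦ lineDeriv ℝ f p (0, 1) := by
  funext p
  simpa [lineDeriv, d2, Prod.add_def] using (deriv_comp_const_add (fun t ↦ f (p.1, t)) p.2 0).symm

/-- The coordinate directions of the plane. -/
def planeBasis : Fin 2 → ℝ × ℝ := ![(1, 0), (0, 1)]

/-- The drift vector of the ADC model. -/
noncomputable def adcDrift (κ₁ θ₁ σ₁ κ₂ θ₂ σ₂ ε₁ ε₂ γ : ℝ) : Fin 2 → ℝ × ℝ → ℝ :=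
  ![A1 κ₁ θ₁ σ₁ κ₂ θ₂ σ₂ ε₁ γ, A2 κ₁ θ₁ σ₁ κ₂ θ₂ σ₂ ε₂ γ]

/-- The diffusion matrix of the ADC model. -/
noncomputable def adcDiffusion (σ₁ σ₂ ε₁ ε₂ γ : ℝ) : Fin 2 → Fin 2 → ℝ × ℝ → ℝ :=
  ![![S11 σ₁ ε₁, S12 γ], ![S12 γ, S22 σ₂ ε₂]]

theorem contDiff_adcDiffusion {n : WithTop ℕ∞} (σ₁ σ₂ ε₁ ε₂ γ : ℝ) (i j : Fin 2) :
    ContDiff ℝ n (adcDiffusion σ₁ σ₂ ε₁ ε₂ γ i j) := by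
  have hS11 : ContDiff ℝ n (S11 σ₁ ε₁) := by unfold S11; fun_prop
  have hS12 : ContDiff ℝ n (S12 γ) := by unfold S12; fun_prop
  have hS22 : ContDiff ℝ n (S22 σ₂ ε₂) := by unfold S22; fun_prop
  fin_cases i <;> fin_cases j <;> assumption

theorem adcGen_eq_diffusionGenerator (κ₁ θ₁ σ₁ κ₂ θ₂ σ₂ ε₁ ε₂ γ : ℝ) {f : ℝ × ℝ → ℝ} {p : ℝ × ℝ}
    (hf : ContDiffAt ℝ 2 f p) :
    adcGen κ₁ θ₁ σ₁ κ₂ θ₂ σ₂ ε₁ ε₂ γ f p =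
      diffusionGenerator planeBasis (adcDrift κ₁ θ₁ σ₁ κ₂ θ₂ σ₂ ε₁ ε₂ γ)
        (adcDiffusion σ₁ σ₂ ε₁ ε₂ γ) f p := by
  simp only [adcGen, diffusionGenerator, planeBasis, adcDrift, adcDiffusion, d1_eq_lineDeriv,
    d2_eq_lineDeriv, Fin.sum_univ_two, Matrix.cons_val_zero, Matrix.cons_val_one,
    lineDeriv_lineDeriv_comm hf (1, 0) (0, 1)]
  ring

theorem d1_pi2_mul (ν₁ θ₁ ν₂ θ₂ : ℝ) {s : ℝ × ℝ → ℝ} {p : ℝ × ℝ} {c : ℝ} (hp : p.1 ≠ 0)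
    (hs : ∀ t, s (t, p.2) = t * c) :
    d1 (fun q ↦ pi2 ν₁ θ₁ ν₂ θ₂ q * s q) p =
      ν₁ * (1 - p.1 / θ₁) * c * pi2 ν₁ θ₁ ν₂ θ₂ p := by
  have hfactor : (fun t ↦ pi2 ν₁ θ₁ ν₂ θ₂ (t, p.2) * s (t, p.2)) =
      fun t ↦ piDens ν₁ θ₁ t * t * (piDens ν₂ θ₂ p.2 * c) := by
    funext t
    rw [hs, pi2]
    ring
  rw [d1, hfactor, ((hasDerivAt_piDens_mul_id ν₁ θ₁ hp).mul_const _).deriv, pi2]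
  ring

theorem d2_pi2_mul (ν₁ θ₁ ν₂ θ₂ : ℝ) {s : ℝ × ℝ → ℝ} {p : ℝ × ℝ} {c : ℝ} (hp : p.2 ≠ 0)
    (hs : ∀ t, s (p.1, t) = t * c) :
    d2 (fun q ↦ pi2 ν₁ θ₁ ν₂ θ₂ q * s q) p =
      ν₂ * (1 - p.2 / θ₂) * c * pi2 ν₁ θ₁ ν₂ θ₂ p := by
  have hfactor : (fun t ↦ pi2 ν₁ θ₁ ν₂ θ₂ (p.1, t) * s (p.1, t)) =
      fun t ↦ piDens ν₂ θ₂ t * t * (piDens ν₁ θ₁ p.1 * c) := by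
    funext t
    rw [hs, pi2]
    ring
  rw [d2, hfactor, ((hasDerivAt_piDens_mul_id ν₂ θ₂ hp).mul_const _).deriv, pi2]
  ring

variable {κ₁ κ₂ θ₁ θ₂ σ₁ σ₂ ν₁ ν₂ : ℝ}

theorem pi2_mul_A1 (hθ₁ : θ₁ ≠ 0) (hθ₂ : θ₂ ≠ 0) (hσ₁ : σ₁ ≠ 0) (hσ₂ : σ₂ ≠ 0)
    (hν₁ : ν₁ = 2 * κ₁ * θ₁ / σ₁ ^ 2) (hν₂ : ν₂ = 2 * κ₂ * θ₂ / σ₂ ^ 2) (ε₁ γ : ℝ)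
    {p : ℝ × ℝ} (hp₁ : p.1 ≠ 0) (hp₂ : p.2 ≠ 0) :
    pi2 ν₁ θ₁ ν₂ θ₂ p * A1 κ₁ θ₁ σ₁ κ₂ θ₂ σ₂ ε₁ γ p =
      1 / 2 * (d1 (fun q ↦ pi2 ν₁ θ₁ ν₂ θ₂ q * S11 σ₁ ε₁ q) p +
        d2 (fun q ↦ pi2 ν₁ θ₁ ν₂ θ₂ q * S12 γ q) p) := by
  rw [d1_pi2_mul ν₁ θ₁ ν₂ θ₂ (c := σ₁ ^ 2 + ε₁ * p.2) hp₁ fun t ↦ by rw [S11]; ring,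
    d2_pi2_mul ν₁ θ₁ ν₂ θ₂ (c := γ * p.1) hp₂ fun t ↦ by rw [S12]; ring, A1]
  generalize pi2 ν₁ θ₁ ν₂ θ₂ p = w
  subst hν₁ hν₂
  field_simp

theorem pi2_mul_A2 (hθ₁ : θ₁ ≠ 0) (hθ₂ : θ₂ ≠ 0) (hσ₁ : σ₁ ≠ 0) (hσ₂ : σ₂ ≠ 0)
    (hν₁ : ν₁ = 2 * κ₁ * θ₁ / σ₁ ^ 2) (hν₂ : ν₂ = 2 * κ₂ * θ₂ / σ₂ ^ 2) (ε₂ γ : ℝ)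
    {p : ℝ × ℝ} (hp₁ : p.1 ≠ 0) (hp₂ : p.2 ≠ 0) :
    pi2 ν₁ θ₁ ν₂ θ₂ p * A2 κ₁ θ₁ σ₁ κ₂ θ₂ σ₂ ε₂ γ p =
      1 / 2 * (d1 (fun q ↦ pi2 ν₁ θ₁ ν₂ θ₂ q * S12 γ q) p +
        d2 (fun q ↦ pi2 ν₁ θ₁ ν₂ θ₂ q * S22 σ₂ ε₂ q) p) := by
  rw [d1_pi2_mul ν₁ θ₁ ν₂ θ₂ (c := γ * p.2) hp₁ fun t ↦ by rw [S12]; ring,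
    d2_pi2_mul ν₁ θ₁ ν₂ θ₂ (c := σ₂ ^ 2 + ε₂ * p.1) hp₂ fun t ↦ by rw [S22]; ring, A2]
  generalize pi2 ν₁ θ₁ ν₂ θ₂ p = w
  subst hν₁ hν₂
  field_simp
  ring

theorem isReversibleWeight_pi2 (hθ₁ : θ₁ ≠ 0) (hθ₂ : θ₂ ≠ 0) (hσ₁ : σ₁ ≠ 0) (hσ₂ : σ₂ ≠ 0)
    (hν₁ : ν₁ = 2 * κ₁ * θ₁ / σ₁ ^ 2) (hν₂ : ν₂ = 2 * κ₂ * θ₂ / σ₂ ^ 2) (ε₁ ε₂ γ : ℝ) :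
    IsReversibleWeight (Ioi 0 ×ˢ Ioi 0) planeBasis (adcDrift κ₁ θ₁ σ₁ κ₂ θ₂ σ₂ ε₁ ε₂ γ)
      (adcDiffusion σ₁ σ₂ ε₁ ε₂ γ) (pi2 ν₁ θ₁ ν₂ θ₂) where
  contDiffOn i j :=
    (contDiffOn_pi2 ν₁ θ₁ ν₂ θ₂).mul (contDiff_adcDiffusion σ₁ σ₂ ε₁ ε₂ γ i j).contDiffOn
  symm i j _ _ := by fin_cases i <;> fin_cases j <;> rfl
  drift j p hp := by
    have hp₁ : p.1 ≠ 0 := ne_of_gt hp.1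
    have hp₂ : p.2 ≠ 0 := ne_of_gt hp.2
    fin_cases j
    · simpa [Fin.sum_univ_two, planeBasis, adcDrift, adcDiffusion, d1_eq_lineDeriv,
        d2_eq_lineDeriv] using pi2_mul_A1 hθ₁ hθ₂ hσ₁ hσ₂ hν₁ hν₂ ε₁ γ hp₁ hp₂
    · simpa [Fin.sum_univ_two, planeBasis, adcDrift, adcDiffusion, d1_eq_lineDeriv,
        d2_eq_lineDeriv] using pi2_mul_A2 hθ₁ hθ₂ hσ₁ hσ₂ hν₁ hν₂ ε₂ γ hp₁ hp₂

theorem adc_generator_symmetric_general (hθ₁ : θ₁ ≠ 0) (hθ₂ : θ₂ ≠ 0) (hσ₁ : σ₁ ≠ 0)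
    (hσ₂ : σ₂ ≠ 0) (hν₁ : ν₁ = 2 * κ₁ * θ₁ / σ₁ ^ 2) (hν₂ : ν₂ = 2 * κ₂ * θ₂ / σ₂ ^ 2)
    (ε₁ ε₂ γ : ℝ) {f g : ℝ × ℝ → ℝ}
    (hf : ContDiffOn ℝ 2 f (Ioi 0 ×ˢ Ioi 0)) (hg : ContDiffOn ℝ 2 g (Ioi 0 ×ˢ Ioi 0))
    (hfg : IsCompact (tsupport f ∩ tsupport g))
    (hfgQ : tsupport f ∩ tsupport g ⊆ Ioi 0 ×ˢ Ioi 0) :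
    ∫ p in Ioi 0 ×ˢ Ioi 0, f p * adcGen κ₁ θ₁ σ₁ κ₂ θ₂ σ₂ ε₁ ε₂ γ g p * pi2 ν₁ θ₁ ν₂ θ₂ p =
      ∫ p in Ioi 0 ×ˢ Ioi 0, g p * adcGen κ₁ θ₁ σ₁ κ₂ θ₂ σ₂ ε₁ ε₂ γ f p * pi2 ν₁ θ₁ ν₂ θ₂ p := by
  have hQ : IsOpen (Ioi (0 : ℝ) ×ˢ Ioi (0 : ℝ)) := isOpen_Ioi.prod isOpen_Ioi
  have hgen {u h : ℝ × ℝ → ℝ} (hh : ContDiffOn ℝ 2 h (Ioi 0 ×ˢ Ioi 0)) :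
      ∫ p in Ioi 0 ×ˢ Ioi 0, u p * adcGen κ₁ θ₁ σ₁ κ₂ θ₂ σ₂ ε₁ ε₂ γ h p * pi2 ν₁ θ₁ ν₂ θ₂ p =
        ∫ p in Ioi 0 ×ˢ Ioi 0, u p * diffusionGenerator planeBasis
          (adcDrift κ₁ θ₁ σ₁ κ₂ θ₂ σ₂ ε₁ ε₂ γ) (adcDiffusion σ₁ σ₂ ε₁ ε₂ γ) h p *
            pi2 ν₁ θ₁ ν₂ θ₂ p :=
    setIntegral_congr_fun hQ.measurableSet fun p hp ↦ by
      simp only [adcGen_eq_diffusionGenerator _ _ _ _ _ _ _ _ _ (hh.contDiffAt (hQ.mem_nhds hp))]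
  rw [hgen hg, hgen hf]
  exact (isReversibleWeight_pi2 hθ₁ hθ₂ hσ₁ hσ₂ hν₁ hν₂ ε₁ ε₂
    γ).setIntegral_mul_diffusionGenerator_comm hQ hf hg hfg hfgQ

end ADC

theorem adc_generator_symmetric
    (κ₁ κ₂ θ₁ θ₂ σ₁ σ₂ ν₁ ν₂ ε₁ ε₂ γ : ℝ)
    (hκ₁ : 0 < κ₁) (hκ₂ : 0 < κ₂) (hθ₁ : 0 < θ₁) (hθ₂ : 0 < θ₂)
    (hσ₁ : 0 < σ₁) (hσ₂ : 0 < σ₂)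
    (hν₁ : ν₁ = 2 * κ₁ * θ₁ / σ₁ ^ 2) (hν₂ : ν₂ = 2 * κ₂ * θ₂ / σ₂ ^ 2)
    (hε₁ : 0 ≤ ε₁) (hε₂ : 0 ≤ ε₂)
    (f g : ℝ × ℝ → ℝ)
    (hf : ContDiff ℝ 2 f) (hfc : HasCompactSupport f)
    (hfs : tsupport f ⊆ Set.Ioi (0:ℝ) ×ˢ Set.Ioi (0:ℝ))
    (hg : ContDiff ℝ 2 g) (hgc : HasCompactSupport g)
    (hgs : tsupport g ⊆ Set.Ioi (0:ℝ) ×ˢ Set.Ioi (0:ℝ)) :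
    ∫ p in Set.Ioi (0:ℝ) ×ˢ Set.Ioi (0:ℝ),
        f p * adcGen κ₁ θ₁ σ₁ κ₂ θ₂ σ₂ ε₁ ε₂ γ g p * pi2 ν₁ θ₁ ν₂ θ₂ p
      = ∫ p in Set.Ioi (0:ℝ) ×ˢ Set.Ioi (0:ℝ),
        g p * adcGen κ₁ θ₁ σ₁ κ₂ θ₂ σ₂ ε₁ ε₂ γ f p * pi2 ν₁ θ₁ ν₂ θ₂ p := by
  exact adc_generator_symmetric_general hθ₁.ne' hθ₂.ne' hσ₁.ne' hσ₂.ne' hν₁ hν₂ ε₁ ε₂ γ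
    hf.contDiffOn hg.contDiffOn (hfc.isCompact.inter_right (isClosed_tsupport g))
    (inter_subset_left.trans hfs)
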